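/- For every A ∈ ℝ, inf{ E_H(γ) : γ : [a,b] → ℝ² locally Lipschitz, γ(a) = γ(b) = (0,0), 𝒜(γ) = A } = (λ₁ + λ₂)|A|; equivalently, in the Carnot–Carathéodory metric d_{F_H} on ℝ³ induced by F_H, the distance between (0,0,0) and (0,0,A) equals (λ₁ + λ₂)|A|. -/

import Mathlib

open MeasureTheory Set Filter Topology
open scoped ENNReal

noncomputable section

/-- The Euclidean norm of a vector in `ℝ × ℝ`. -/
def enorm2 (v : ℝ × ℝ) : ℝ := Real.sqrt (v.1 ^ 2 + v.2 ^ 2)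

/-- The degenerate length `E(γ) = ∫ₐᵇ F(γ(t)) |γ'(t)| dt` of a planar curve. -/
def degLen (F : ℝ × ℝ → ℝ) (a b : ℝ) (γ : ℝ → ℝ × ℝ) : ℝ :=
  ∫ t in a..b, F (γ t) * enorm2 (deriv γ t)

/-- The signed area `𝒜(γ) = ∫ₐᵇ γ¹(t) (γ²)'(t) dt` of a planar curve. -/
def sArea (a b : ℝ) (γ : ℝ → ℝ × ℝ) : ℝ :=
  ∫ t in a..b, (γ t).1 * deriv (fun s => (γ s).2) t

/-- A locally Lipschitz curve on `[a,b]` joining `p` to `q`. -/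
def IsCurve (a b : ℝ) (γ : ℝ → ℝ × ℝ) (p q : ℝ × ℝ) : Prop :=
  a ≤ b ∧ LocallyLipschitz γ ∧ γ a = p ∧ γ b = q

/-- The homogeneous conformal factor `F_H(p) = √(λ₁²p₁² + λ₂²p₂²)`. -/
def FH (l1 l2 : ℝ) (p : ℝ × ℝ) : ℝ := Real.sqrt (l1 ^ 2 * p.1 ^ 2 + l2 ^ 2 * p.2 ^ 2)

/-- The singular Carnot–Carathéodory distance on `ℝ³` induced by the conformal factor `F`:
the infimum of degenerate lengths of locally Lipschitz planar curves joining the planar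
projections of `P` and `Q` whose signed area equals the difference of third coordinates. -/
def dCC (F : ℝ × ℝ → ℝ) (P Q : ℝ × ℝ × ℝ) : ℝ :=
  sInf { x | ∃ a b γ, IsCurve a b γ (P.1, P.2.1) (Q.1, Q.2.1) ∧
      sArea a b γ = Q.2.2 - P.2.2 ∧ degLen F a b γ = x }

/-!
Lagrange's identity writes `F_H(γ)|γ'|` as the norm of the pair
`(λ₁ x y' - λ₂ y x', λ₁ x x' + λ₂ y y')`. The first entry integrates to `(λ₁ + λ₂) 𝒜(γ)` along a
loop, which gives the lower bound. Along the ellipses `λ₁ x² + λ₂ y² = const` the second entry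
vanishes and the first has constant sign, so there nothing is lost. A loop that spirals out from
the origin and back with angular speed `N` about these ellipses has area of order `N` and exceeds
the lower bound by an amount independent of `N`. Area and length are both quadratic under
dilations, so rescaling to area `A` leaves an excess of order `1 / N`.
-/

section LocallyLipschitz

lemma absolutelyContinuousOnInterval_of_locallyLipschitz {X : Type*} [PseudoMetricSpace X]
    {f : ℝ → X} (hf : LocallyLipschitz f) (a b : ℝ) : AbsolutelyContinuousOnInterval f a b := by
  obtain ⟨K, hK⟩ :=
    (hf.locallyLipschitzOn (s := uIcc a b)).exists_lipschitzOnWith_of_compact isCompact_uIcc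
  exact hK.absolutelyContinuousOnInterval

variable {E : Type*} [NormedAddCommGroup E] [NormedSpace ℝ E] {f : ℝ → E}

lemma ae_differentiableAt_of_locallyLipschitz [FiniteDimensional ℝ E] (hf : LocallyLipschitz f) :
    ∀ᵐ t, DifferentiableAt ℝ f t :=
  LocallyBoundedVariationOn.ae_differentiableAt fun a b _ _ =>
    (absolutelyContinuousOnInterval_of_locallyLipschitz hf a b).boundedVariationOn.mono
      (inter_subset_right.trans Icc_subset_uIcc)

lemma exists_norm_deriv_le_of_locallyLipschitz (hf : LocallyLipschitz f) (a b : ℝ) :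
    ∃ K, ∀ t ∈ Icc a b, ‖deriv f t‖ ≤ K := by
  obtain ⟨K, hK⟩ := (hf.locallyLipschitzOn (s := Icc (a - 1) (b + 1)))
    |>.exists_lipschitzOnWith_of_compact isCompact_Icc
  exact ⟨K, fun t ht => norm_deriv_le_of_lipschitzOn
    (Icc_mem_nhds (by linarith [ht.1]) (by linarith [ht.2])) hK⟩

lemma intervalIntegrable_comp_deriv_of_locallyLipschitz [FiniteDimensional ℝ E]
    (hf : LocallyLipschitz f) {Φ : E × E → ℝ} (hΦ : Continuous Φ) (a b : ℝ) :
    IntervalIntegrable (fun t => Φ (f t, deriv f t)) volume a b := by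
  have : ProperSpace E := FiniteDimensional.proper_real E
  obtain ⟨K, hK⟩ := exists_norm_deriv_le_of_locallyLipschitz hf (min a b) (max a b)
  obtain ⟨C, hC⟩ := ((isCompact_uIcc.image hf.continuous).prod
    (isCompact_closedBall (0 : E) K)).exists_bound_of_continuousOn hΦ.continuousOn
  refine (intervalIntegrable_const (c := C)).mono_fun' ?_ ?_
  · exact (hΦ.comp_stronglyMeasurable
      (hf.continuous.stronglyMeasurable.prodMk (stronglyMeasurable_deriv f))).aestronglyMeasurable
  · refine (ae_restrict_iff' measurableSet_uIoc).2 (.of_forall fun t ht => ?_)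
    have ht' := uIoc_subset_uIcc ht
    exact hC _ ⟨mem_image_of_mem f ht', mem_closedBall_zero_iff.2 (hK t ht')⟩

end LocallyLipschitz

section PointwiseCost

lemma continuous_enorm2 : Continuous enorm2 := by
  unfold enorm2; fun_prop

lemma enorm2_smul (r : ℝ) (v : ℝ × ℝ) : enorm2 (r • v) = |r| * enorm2 v := by
  rw [enorm2, enorm2, ← Real.sqrt_sq_eq_abs, ← Real.sqrt_mul (sq_nonneg r)]
  congr 1
  simp only [Prod.smul_fst, Prod.smul_snd, smul_eq_mul]
  ring

lemma enorm2_neg (v : ℝ × ℝ) : enorm2 (-v) = enorm2 v := by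
  simp only [enorm2, Prod.fst_neg, Prod.snd_neg, neg_sq]

lemma abs_fst_le_enorm2 (v : ℝ × ℝ) : |v.1| ≤ enorm2 v :=
  Real.abs_le_sqrt (le_add_of_nonneg_right (sq_nonneg _))

lemma enorm2_le_abs_add_abs (v : ℝ × ℝ) : enorm2 v ≤ |v.1| + |v.2| := by
  refine Real.sqrt_le_iff.2 ⟨by positivity, ?_⟩
  rw [add_sq, sq_abs, sq_abs]
  linarith [mul_nonneg (abs_nonneg v.1) (abs_nonneg v.2)]

variable (l1 l2 : ℝ)

lemma continuous_FH : Continuous (FH l1 l2) := by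
  unfold FH; fun_prop

lemma FH_eq_enorm2 (p : ℝ × ℝ) : FH l1 l2 p = enorm2 (l1 * p.1, l2 * p.2) := by
  simp only [FH, enorm2, mul_pow]

lemma FH_smul (r : ℝ) (p : ℝ × ℝ) : FH l1 l2 (r • p) = |r| * FH l1 l2 p := by
  rw [FH_eq_enorm2, FH_eq_enorm2, ← enorm2_smul]
  congr 1
  ext <;> simp only [Prod.smul_fst, Prod.smul_snd, smul_eq_mul] <;> ring

/-- The 1-form `λ₁ x dy - λ₂ y dx`, evaluated at the point `p` on the vector `v`. It is the
calibration for `FH l1 l2`: its integral over a loop is `λ₁ + λ₂` times the signed area. -/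
def areaForm (p v : ℝ × ℝ) : ℝ := l1 * (p.1 * v.2) - l2 * (p.2 * v.1)

/-- The 1-form `λ₁ x dx + λ₂ y dy`, evaluated at the point `p` on the vector `v`. It vanishes on
the tangent vectors of the ellipses `λ₁ x² + λ₂ y² = const`. -/
def radialForm (p v : ℝ × ℝ) : ℝ := l1 * (p.1 * v.1) + l2 * (p.2 * v.2)

lemma FH_mul_enorm2 (p v : ℝ × ℝ) :
    FH l1 l2 p * enorm2 v = enorm2 (areaForm l1 l2 p v, radialForm l1 l2 p v) := by
  rw [FH, enorm2, enorm2, ← Real.sqrt_mul (by positivity)]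
  congr 1
  simp only [areaForm, radialForm]
  ring

lemma abs_areaForm_le (p v : ℝ × ℝ) : |areaForm l1 l2 p v| ≤ FH l1 l2 p * enorm2 v :=
  FH_mul_enorm2 l1 l2 p v ▸ abs_fst_le_enorm2 (areaForm l1 l2 p v, radialForm l1 l2 p v)

lemma FH_mul_enorm2_le (p v : ℝ × ℝ) :
    FH l1 l2 p * enorm2 v ≤ |areaForm l1 l2 p v| + |radialForm l1 l2 p v| :=
  FH_mul_enorm2 l1 l2 p v ▸ enorm2_le_abs_add_abs _

end PointwiseCost

section LowerBound

variable {γ : ℝ → ℝ × ℝ} {a b : ℝ} {p : ℝ × ℝ} (l1 l2 : ℝ)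

lemma intervalIntegrable_FH_mul_enorm2_deriv (hγ : LocallyLipschitz γ) (a b : ℝ) :
    IntervalIntegrable (fun t => FH l1 l2 (γ t) * enorm2 (deriv γ t)) volume a b :=
  intervalIntegrable_comp_deriv_of_locallyLipschitz hγ
    (Φ := fun z => FH l1 l2 z.1 * enorm2 z.2)
    (((continuous_FH l1 l2).comp continuous_fst).mul (continuous_enorm2.comp continuous_snd)) a b

lemma intervalIntegrable_areaForm_deriv (hγ : LocallyLipschitz γ) (a b : ℝ) :
    IntervalIntegrable (fun t => areaForm l1 l2 (γ t) (deriv γ t)) volume a b :=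
  intervalIntegrable_comp_deriv_of_locallyLipschitz hγ (Φ := fun z => areaForm l1 l2 z.1 z.2)
    (by unfold areaForm; fun_prop) a b

lemma integral_areaForm_deriv (hγ : LocallyLipschitz γ) (hab : γ a = γ b) :
    ∫ t in a..b, areaForm l1 l2 (γ t) (deriv γ t) = (l1 + l2) * sArea a b γ := by
  have hx : AbsolutelyContinuousOnInterval (fun t => (γ t).1) a b :=
    absolutelyContinuousOnInterval_of_locallyLipschitz
      (LipschitzWith.prod_fst.locallyLipschitz.comp hγ) a b
  have hy : AbsolutelyContinuousOnInterval (fun t => (γ t).2) a b :=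
    absolutelyContinuousOnInterval_of_locallyLipschitz
      (LipschitzWith.prod_snd.locallyLipschitz.comp hγ) a b
  have hxdy := hy.intervalIntegrable_deriv.continuousOn_mul hx.continuousOn
  have hydx := hx.intervalIntegrable_deriv.mul_continuousOn hy.continuousOn
  have by_parts : ∫ t in a..b, deriv (fun s => (γ s).1) t * (γ t).2 = -sArea a b γ := by
    rw [sArea, hx.integral_mul_deriv_eq_deriv_mul hy, hab]
    ring
  calc ∫ t in a..b, areaForm l1 l2 (γ t) (deriv γ t)
      = ∫ t in a..b, (l1 * ((γ t).1 * deriv (fun s => (γ s).2) t)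
          - l2 * (deriv (fun s => (γ s).1) t * (γ t).2)) := by
        refine intervalIntegral.integral_congr_ae ?_
        filter_upwards [ae_differentiableAt_of_locallyLipschitz hγ] with t ht _
        have deriv_fst : deriv (fun s => (γ s).1) t = (deriv γ t).1 :=
          ((ContinuousLinearMap.fst ℝ ℝ ℝ).hasFDerivAt.comp_hasDerivAt t ht.hasDerivAt).deriv
        have deriv_snd : deriv (fun s => (γ s).2) t = (deriv γ t).2 :=
          ((ContinuousLinearMap.snd ℝ ℝ ℝ).hasFDerivAt.comp_hasDerivAt t ht.hasDerivAt).deriv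
        rw [areaForm, deriv_fst, deriv_snd, mul_comm (γ t).2]
    _ = l1 * sArea a b γ - l2 * -sArea a b γ := by
        rw [intervalIntegral.integral_sub (hxdy.const_mul _) (hydx.const_mul _),
          intervalIntegral.integral_const_mul, intervalIntegral.integral_const_mul, by_parts, sArea]
    _ = (l1 + l2) * sArea a b γ := by ring

theorem abs_add_mul_abs_sArea_le_degLen (hγ : IsCurve a b γ p p) :
    |l1 + l2| * |sArea a b γ| ≤ degLen (FH l1 l2) a b γ := by
  obtain ⟨hab, hLip, ha, hb⟩ := hγ
  rw [← abs_mul, ← integral_areaForm_deriv l1 l2 hLip (ha.trans hb.symm)]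
  exact intervalIntegral.norm_integral_le_of_norm_le hab
    (f := fun t => areaForm l1 l2 (γ t) (deriv γ t))
    (.of_forall fun t _ => abs_areaForm_le l1 l2 (γ t) (deriv γ t))
    (intervalIntegrable_FH_mul_enorm2_deriv l1 l2 hLip a b)

end LowerBound

section Symmetries

variable {γ : ℝ → ℝ × ℝ} {a b : ℝ} {p q : ℝ × ℝ}

lemma isCurve_smul (r : ℝ) (hγ : IsCurve a b γ p q) :
    IsCurve a b (fun t => r • γ t) (r • p) (r • q) := by
  obtain ⟨hab, hLip, rfl, rfl⟩ := hγ
  exact ⟨hab, (lipschitzWith_smul r).locallyLipschitz.comp hLip, rfl, rfl⟩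

lemma sArea_smul (r a b : ℝ) (γ : ℝ → ℝ × ℝ) :
    sArea a b (fun t => r • γ t) = r ^ 2 * sArea a b γ := by
  simp only [sArea, Prod.smul_fst, Prod.smul_snd, smul_eq_mul, deriv_const_mul_field',
    ← intervalIntegral.integral_const_mul]
  congr 1 with t
  ring

lemma degLen_smul {F : ℝ × ℝ → ℝ} {r : ℝ} (hF : ∀ p, F (r • p) = |r| * F p) (a b : ℝ)
    (γ : ℝ → ℝ × ℝ) : degLen F a b (fun t => r • γ t) = r ^ 2 * degLen F a b γ := by
  simp only [degLen, hF, deriv_fun_const_smul_field, enorm2_smul,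
    ← intervalIntegral.integral_const_mul, ← sq_abs r]
  congr 1 with t
  ring

lemma isCurve_reverse (hγ : IsCurve a b γ p q) : IsCurve a b (fun t => γ (a + b - t)) q p := by
  obtain ⟨hab, hLip, rfl, rfl⟩ := hγ
  refine ⟨hab, hLip.comp (g := fun t => a + b - t) ?_, by simp, by simp⟩
  exact (LipschitzWith.const (a + b)).sub .id |>.locallyLipschitz

lemma sArea_reverse (a b : ℝ) (γ : ℝ → ℝ × ℝ) :
    sArea a b (fun t => γ (a + b - t)) = -sArea a b γ := by
  simp only [sArea, deriv_comp_const_sub (f := fun s => (γ s).2), mul_neg,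
    intervalIntegral.integral_neg]
  rw [intervalIntegral.integral_comp_sub_left
    (fun t => (γ t).1 * deriv (fun s => (γ s).2) t), add_sub_cancel_right, add_sub_cancel_left]

lemma degLen_reverse (F : ℝ × ℝ → ℝ) (a b : ℝ) (γ : ℝ → ℝ × ℝ) :
    degLen F a b (fun t => γ (a + b - t)) = degLen F a b γ := by
  simp only [degLen, deriv_comp_const_sub, enorm2_neg]
  rw [intervalIntegral.integral_comp_sub_left (fun t => F (γ t) * enorm2 (deriv γ t)),
    add_sub_cancel_right, add_sub_cancel_left]

end Symmetries

section Rose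

/-- The point with polar coordinates `(r, θ)` adapted to the ellipses `m² x² + n² y² = r²`. -/
def ellipticPolar (m n r θ : ℝ) : ℝ × ℝ := (r * Real.cos θ / m, r * Real.sin θ / n)

/-- The velocity of a curve `ellipticPolar m n r θ` at which `r' = u` and `θ' = w`. -/
def ellipticPolarVelocity (m n r θ u w : ℝ) : ℝ × ℝ :=
  ((u * Real.cos θ - r * w * Real.sin θ) / m, (u * Real.sin θ + r * w * Real.cos θ) / n)

lemma hasDerivAt_ellipticPolar (m n : ℝ) {r θ : ℝ → ℝ} {u w t : ℝ} (hr : HasDerivAt r u t)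
    (hθ : HasDerivAt θ w t) :
    HasDerivAt (fun s => ellipticPolar m n (r s) (θ s))
      (ellipticPolarVelocity m n (r t) (θ t) u w) t := by
  refine (((hr.mul hθ.cos).div_const m).prodMk ((hr.mul hθ.sin).div_const n)).congr_deriv ?_
  ext <;> simp only [ellipticPolarVelocity] <;> ring

variable {m n : ℝ}

lemma areaForm_ellipticPolar (hm : m ≠ 0) (hn : n ≠ 0) (r θ u w : ℝ) :
    areaForm (m ^ 2) (n ^ 2) (ellipticPolar m n r θ) (ellipticPolarVelocity m n r θ u w) =
      r ^ 2 * w * (m / n * Real.cos θ ^ 2 + n / m * Real.sin θ ^ 2)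
        + r * u * (Real.sin θ * Real.cos θ) * (m / n - n / m) := by
  simp only [areaForm, ellipticPolar, ellipticPolarVelocity]
  field_simp
  ring

lemma areaForm_one_one_ellipticPolar (m n r θ u w : ℝ) :
    areaForm 1 1 (ellipticPolar m n r θ) (ellipticPolarVelocity m n r θ u w) =
      w / (m * n) * r ^ 2 := by
  simp only [areaForm, ellipticPolar, ellipticPolarVelocity]
  linear_combination w / (m * n) * r ^ 2 * Real.sin_sq_add_cos_sq θ

lemma radialForm_ellipticPolar (hm : m ≠ 0) (hn : n ≠ 0) (r θ u w : ℝ) :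
    radialForm (m ^ 2) (n ^ 2) (ellipticPolar m n r θ) (ellipticPolarVelocity m n r θ u w) =
      r * u := by
  simp only [radialForm, ellipticPolar, ellipticPolarVelocity]
  field_simp
  linear_combination r * u * Real.sin_sq_add_cos_sq θ

lemma abs_sin_mul_cos_le_one (θ : ℝ) : |Real.sin θ * Real.cos θ| ≤ 1 := by
  rw [abs_mul]
  exact mul_le_one₀ (Real.abs_sin_le_one θ) (abs_nonneg _) (Real.abs_cos_le_one θ)

lemma abs_add_le_add_two_mul_abs {x : ℝ} (hx : 0 ≤ x) (y : ℝ) : |x + y| ≤ x + y + 2 * |y| := by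
  linarith [abs_add_le x y, abs_of_nonneg hx, neg_abs_le y]

lemma FH_mul_enorm2_ellipticPolar_le (hm : 0 < m) (hn : 0 < n) (r θ u : ℝ) {w : ℝ} (hw : 0 ≤ w) :
    FH (m ^ 2) (n ^ 2) (ellipticPolar m n r θ) * enorm2 (ellipticPolarVelocity m n r θ u w) ≤
      areaForm (m ^ 2) (n ^ 2) (ellipticPolar m n r θ) (ellipticPolarVelocity m n r θ u w)
        + (1 + 2 * |m / n - n / m|) * |r * u| := by
  have angular_nonneg : 0 ≤ r ^ 2 * w * (m / n * Real.cos θ ^ 2 + n / m * Real.sin θ ^ 2) := by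
    positivity
  have mixed_le : |r * u * (Real.sin θ * Real.cos θ) * (m / n - n / m)|
      ≤ |r * u| * |m / n - n / m| := by
    rw [abs_mul, abs_mul (r * u)]
    gcongr
    exact mul_le_of_le_one_right (abs_nonneg _) (abs_sin_mul_cos_le_one θ)
  refine (FH_mul_enorm2_le _ _ _ _).trans ?_
  rw [radialForm_ellipticPolar hm.ne' hn.ne', areaForm_ellipticPolar hm.ne' hn.ne']
  linarith [abs_add_le_add_two_mul_abs angular_nonneg
    (r * u * (Real.sin θ * Real.cos θ) * (m / n - n / m))]

/-- The rose curve `r = sin t`, `θ = N t` in the coordinates `ellipticPolar m n`. On `[0, π]` it is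
a loop based at the origin for every real `N`, because `sin` vanishes at both ends. -/
def rose (m n N t : ℝ) : ℝ × ℝ := ellipticPolar m n (Real.sin t) (N * t)

variable (m n)

lemma isCurve_rose (N : ℝ) : IsCurve 0 Real.pi (rose m n N) (0, 0) (0, 0) := by
  refine ⟨Real.pi_pos.le, ContDiff.locallyLipschitz (𝕂 := ℝ) ?_, ?_, ?_⟩
  · unfold rose ellipticPolar
    fun_prop
  all_goals simp [rose, ellipticPolar]

lemma deriv_rose (N t : ℝ) :
    deriv (rose m n N) t = ellipticPolarVelocity m n (Real.sin t) (N * t) (Real.cos t) N :=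
  (hasDerivAt_ellipticPolar m n (Real.hasDerivAt_sin t) (hasDerivAt_const_mul N)).deriv

lemma sArea_rose (N : ℝ) : sArea 0 Real.pi (rose m n N) = N * Real.pi / (4 * (m * n)) := by
  obtain ⟨-, hLip, h0, hpi⟩ := isCurve_rose m n N
  have two_mul_area : ∫ t in 0..Real.pi, N / (m * n) * Real.sin t ^ 2 =
      (1 + 1) * sArea 0 Real.pi (rose m n N) := by
    rw [← integral_areaForm_deriv 1 1 hLip (h0.trans hpi.symm)]
    simp only [deriv_rose, rose, areaForm_one_one_ellipticPolar]
  rw [intervalIntegral.integral_const_mul, integral_sin_sq, Real.sin_zero, Real.sin_pi]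
    at two_mul_area
  linear_combination -two_mul_area / 2

variable {m n}

lemma degLen_rose_le (hm : 0 < m) (hn : 0 < n) {N : ℝ} (hN : 0 ≤ N) :
    degLen (FH (m ^ 2) (n ^ 2)) 0 Real.pi (rose m n N) ≤
      (m ^ 2 + n ^ 2) * sArea 0 Real.pi (rose m n N) + (1 + 2 * |m / n - n / m|) * Real.pi := by
  obtain ⟨-, hLip, h0, hpi⟩ := isCurve_rose m n N
  have integrable_areaForm := intervalIntegrable_areaForm_deriv (m ^ 2) (n ^ 2) hLip 0 Real.pi
  set C := 1 + 2 * |m / n - n / m|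
  calc degLen (FH (m ^ 2) (n ^ 2)) 0 Real.pi (rose m n N)
      ≤ ∫ t in 0..Real.pi,
          (areaForm (m ^ 2) (n ^ 2) (rose m n N t) (deriv (rose m n N) t) + C) := by
        refine intervalIntegral.integral_mono_on Real.pi_pos.le
          (intervalIntegrable_FH_mul_enorm2_deriv _ _ hLip _ _)
          (integrable_areaForm.add intervalIntegrable_const) fun t _ => ?_
        rw [deriv_rose, rose]
        refine (FH_mul_enorm2_ellipticPolar_le hm hn _ _ _ hN).trans ?_
        gcongr
        exact mul_le_of_le_one_right (by positivity) (abs_sin_mul_cos_le_one t)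
    _ = (m ^ 2 + n ^ 2) * sArea 0 Real.pi (rose m n N) + C * Real.pi := by
        rw [intervalIntegral.integral_add integrable_areaForm intervalIntegrable_const,
          integral_areaForm_deriv _ _ hLip (h0.trans hpi.symm), intervalIntegral.integral_const,
          smul_eq_mul, sub_zero, mul_comm C]

end Rose

section UpperBound

variable {l1 l2 : ℝ}

lemma exists_loop_degLen_le_add (hl1 : 0 < l1) (hl2 : 0 < l2) :
    ∃ C, ∀ S > 0, ∃ a b γ, IsCurve a b γ (0, 0) (0, 0) ∧ sArea a b γ = S ∧
      degLen (FH l1 l2) a b γ ≤ (l1 + l2) * S + C := by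
  have hm := Real.sqrt_pos.2 hl1
  have hn := Real.sqrt_pos.2 hl2
  refine ⟨(1 + 2 * |√l1 / √l2 - √l2 / √l1|) * Real.pi, fun S hS => ?_⟩
  set N := 4 * (√l1 * √l2) * S / Real.pi with hN
  have area : sArea 0 Real.pi (rose √l1 √l2 N) = S := by
    rw [sArea_rose, hN]
    field_simp
  refine ⟨0, Real.pi, rose √l1 √l2 N, isCurve_rose _ _ _, area, ?_⟩
  have length_le := degLen_rose_le hm hn (N := N) (by positivity)
  rwa [area, Real.sq_sqrt hl1.le, Real.sq_sqrt hl2.le] at length_le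

lemma exists_loop_degLen_lt_of_nonneg (hl1 : 0 < l1) (hl2 : 0 < l2) {A : ℝ} (hA : 0 ≤ A) {ε : ℝ}
    (hε : 0 < ε) :
    ∃ a b γ, IsCurve a b γ (0, 0) (0, 0) ∧ sArea a b γ = A ∧
      degLen (FH l1 l2) a b γ < (l1 + l2) * A + ε := by
  obtain ⟨C, exists_loop⟩ := exists_loop_degLen_le_add hl1 hl2
  obtain ⟨c, hc, hcε⟩ := exists_pos_mul_lt hε (A * C)
  obtain ⟨a, b, γ, hγ, area, length_le⟩ := exists_loop c⁻¹ (inv_pos.2 hc)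
  have hr : √(A * c) ^ 2 = A * c := Real.sq_sqrt (by positivity)
  refine ⟨a, b, fun t => √(A * c) • γ t, by simpa using isCurve_smul √(A * c) hγ, ?_, ?_⟩
  · rw [sArea_smul, hr, area, mul_inv_cancel_right₀ hc.ne']
  · calc degLen (FH l1 l2) a b (fun t => √(A * c) • γ t)
        = A * c * degLen (FH l1 l2) a b γ := by rw [degLen_smul (FH_smul l1 l2 _), hr]
      _ ≤ A * c * ((l1 + l2) * c⁻¹ + C) := by gcongr
      _ = (l1 + l2) * A + A * C * c := by field_simp
      _ < (l1 + l2) * A + ε := by gcongr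

theorem exists_loop_degLen_lt (hl1 : 0 < l1) (hl2 : 0 < l2) (A : ℝ) {ε : ℝ} (hε : 0 < ε) :
    ∃ a b γ, IsCurve a b γ (0, 0) (0, 0) ∧ sArea a b γ = A ∧
      degLen (FH l1 l2) a b γ < (l1 + l2) * |A| + ε := by
  obtain ⟨a, b, γ, hγ, area, length_lt⟩ :=
    exists_loop_degLen_lt_of_nonneg hl1 hl2 (abs_nonneg A) hε
  rcases abs_choice A with hA | hA
  · exact ⟨a, b, γ, hγ, area.trans hA, length_lt⟩
  · exact ⟨a, b, fun t => γ (a + b - t), isCurve_reverse hγ,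
      by rw [sArea_reverse, area, hA, neg_neg], by rwa [degLen_reverse]⟩

end UpperBound

/-- in the homogeneous metric, the cost of enclosing signed area `A` by loops based
at the origin is exactly `(λ₁+λ₂)|A|`; equivalently the Carnot–Carathéodory distance between
`(0,0,0)` and `(0,0,A)` equals `(λ₁+λ₂)|A|`. -/
theorem homogeneous_vertical_cost (l1 l2 : ℝ) (hl1 : 0 < l1) (hl2 : 0 < l2) (A : ℝ) :
    sInf { x | ∃ a b γ, IsCurve a b γ (0, 0) (0, 0) ∧ sArea a b γ = A ∧
        degLen (FH l1 l2) a b γ = x } = (l1 + l2) * |A| ∧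
    dCC (FH l1 l2) (0, 0, 0) (0, 0, A) = (l1 + l2) * |A| := by
  have inf_eq : sInf { x | ∃ a b γ, IsCurve a b γ (0, 0) (0, 0) ∧ sArea a b γ = A ∧
      degLen (FH l1 l2) a b γ = x } = (l1 + l2) * |A| := by
    apply csInf_eq_of_forall_ge_of_forall_gt_exists_lt
    · obtain ⟨a, b, γ, hγ, area, -⟩ := exists_loop_degLen_lt hl1 hl2 A one_pos
      exact ⟨_, a, b, γ, hγ, area, rfl⟩
    · rintro _ ⟨a, b, γ, hγ, rfl, rfl⟩
      simpa only [abs_of_pos (add_pos hl1 hl2)] using abs_add_mul_abs_sArea_le_degLen l1 l2 hγ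
    · intro x hx
      obtain ⟨a, b, γ, hγ, area, length_lt⟩ := exists_loop_degLen_lt hl1 hl2 A (sub_pos.2 hx)
      exact ⟨_, ⟨a, b, γ, hγ, area, rfl⟩, by linarith⟩
  exact ⟨inf_eq, by simpa only [dCC, sub_zero] using inf_eq⟩
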